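/- arXiv:2502.12313 — 2 statements merged into one kernel-verified Lean document; each statement's English description precedes it below -/
import Mathlib

section
/- Let λ > 0 and let F be the exponential distribution with F(z) = 1 − e^{−λz} on [0,∞). Then R*_F = 1/(λe), the expected revenue of the optimal prediction-ignoring mechanism equals φ⁻¹(R*_F)·(1−F(φ⁻¹(R*_F))) + F(φ⁻¹(R*_F))·R*_F = (1/λ)·(e^{−1−1/e} + 1/e), and the ratio of the optimal expected revenue R^s_F + R^h_F = (1/λ)·(1 + 1/(2e)) to this quantity equals (e + 1/2)/(1 + e^{−1/e}) ≈ 1.902. -/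
open MeasureTheory Real Set

/-!
At the price `φ⁻¹(y) = y + 1/λ` the exponential buyer accepts with probability `e⁻¹ · e^(-λy)`.
Hence offering the item at `φ⁻¹(R)` with a fallback worth `R` adds exactly `e^(-1 - λR) / λ` to the
fallback: no fallback (`R = 0`) gives the optimal fixed-price revenue `1/(λe)`, and using that
revenue as the fallback gives the prediction-ignoring mechanism. The same acceptance probability
turns the revenues from a strategic and an honest bidder into Gamma integrals, equal to
`(1/λ) · 3/(4e)` and `(1/λ) · (1 - 1/(4e))`.
-/

lemma exp_neg_two_mul_mul (b z : ℝ) : exp (-(2 * b * z)) = exp (-(b * z)) ^ 2 := by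
  rw [← exp_nat_mul, Nat.cast_two, mul_neg, mul_assoc]

lemma integrableOn_pow_mul_exp_neg_mul_Ioi (n : ℕ) {b : ℝ} (hb : 0 < b) :
    IntegrableOn (fun z : ℝ ↦ z ^ n * exp (-(b * z))) (Ioi 0) := by
  have hn : (-1 : ℝ) < n := by linarith [n.cast_nonneg (α := ℝ)]
  simpa only [rpow_natCast, rpow_one, neg_mul] using
    integrableOn_rpow_mul_exp_neg_mul_rpow hn one_pos hb

lemma integral_pow_mul_exp_neg_mul_Ioi (n : ℕ) {b : ℝ} (hb : 0 < b) :
    ∫ z in Ioi (0 : ℝ), z ^ n * exp (-(b * z)) = n.factorial / b ^ (n + 1) := by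
  have h := integral_rpow_mul_exp_neg_mul_Ioi (a := n + 1) (by positivity) hb
  rw [Gamma_nat_eq_factorial] at h
  simp only [add_sub_cancel_right, rpow_natCast] at h
  rw [h, ← Nat.cast_succ, rpow_natCast, one_div, inv_pow, mul_comm, div_eq_mul_inv]

/-- The expected revenue of offering the item at price `ψ R = φ⁻¹(R)` to an agent with value
distribution `F`, when the seller earns `R` in expectation if the agent declines. Its value at
`R = 0` is `R*_F`, and its value at `R = R*_F` is the revenue of the optimal prediction-ignoring
mechanism. -/
def offerRevenue (F ψ : ℝ → ℝ) (R : ℝ) : ℝ :=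
  ψ R * (1 - F (ψ R)) + F (ψ R) * R

lemma offerRevenue_zero (F ψ : ℝ → ℝ) : offerRevenue F ψ 0 = ψ 0 * (1 - F (ψ 0)) := by
  rw [offerRevenue, mul_zero, add_zero]

section ExponentialRevenue

variable {l : ℝ} {F f ψ : ℝ → ℝ} (hl : 0 < l)
  (hF : ∀ z : ℝ, 0 ≤ z → F z = 1 - exp (-(l * z)))
  (hf : ∀ z : ℝ, 0 ≤ z → f z = l * exp (-(l * z)))
  (hψ : ∀ y : ℝ, 0 ≤ y → ψ y = y + 1 / l)

include hl hF hψ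

lemma cdf_inverse_virtual_valuation {y : ℝ} (hy : 0 ≤ y) :
    F (ψ y) = 1 - exp (-1) * exp (-(l * y)) := by
  have hexponent : -(l * (y + 1 / l)) = -1 + -(l * y) := by
    field_simp
    ring
  rw [hψ y hy, hF _ (by positivity), hexponent, exp_add]

lemma offerRevenue_eq {R : ℝ} (hR : 0 ≤ R) :
    offerRevenue F ψ R = R + 1 / l * (exp (-1) * exp (-(l * R))) := by
  rw [offerRevenue, cdf_inverse_virtual_valuation hl hF hψ hR, hψ R hR]
  ring

lemma optimal_fixed_price_revenue_eq : offerRevenue F ψ 0 = 1 / (l * exp 1) := by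
  rw [offerRevenue_eq hl hF hψ le_rfl, mul_zero, neg_zero, exp_zero, mul_one, zero_add, exp_neg,
    ← one_div, one_div_mul_one_div]

lemma prediction_ignoring_revenue_eq :
    offerRevenue F ψ (offerRevenue F ψ 0) = 1 / l * (exp (-1 - 1 / exp 1) + 1 / exp 1) := by
  have hscale : l * (1 / (l * exp 1)) = 1 / exp 1 := by field_simp
  rw [optimal_fixed_price_revenue_eq hl hF hψ, offerRevenue_eq hl hF hψ (by positivity), hscale,
    sub_eq_add_neg, exp_add]
  ring

include hf

lemma strategic_revenue_eq :
    ∫ z in Ioi (0 : ℝ), ψ z * (1 - F (ψ z)) * f z = 1 / l * (3 / (4 * exp 1)) := by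
  have h2l : 0 < 2 * l := by positivity
  have hintegrand : EqOn (fun z ↦ ψ z * (1 - F (ψ z)) * f z)
      (fun z ↦ exp (-1) * l * (z ^ 1 * exp (-(2 * l * z)))
        + exp (-1) * (z ^ 0 * exp (-(2 * l * z)))) (Ioi 0) := by
    intro z (hz : 0 < z)
    simp only [cdf_inverse_virtual_valuation hl hF hψ hz.le]
    rw [hψ z hz.le, hf z hz.le, exp_neg_two_mul_mul]
    field_simp
    ring
  rw [setIntegral_congr_fun measurableSet_Ioi hintegrand,
    integral_add ((integrableOn_pow_mul_exp_neg_mul_Ioi 1 h2l).const_mul _)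
      ((integrableOn_pow_mul_exp_neg_mul_Ioi 0 h2l).const_mul _),
    integral_const_mul, integral_const_mul, integral_pow_mul_exp_neg_mul_Ioi 1 h2l,
    integral_pow_mul_exp_neg_mul_Ioi 0 h2l, exp_neg, Nat.factorial_one, Nat.factorial_zero]
  field_simp
  ring

lemma honest_revenue_eq :
    ∫ z in Ioi (0 : ℝ), z * F (ψ z) * f z = 1 / l * (1 - 1 / (4 * exp 1)) := by
  have h2l : 0 < 2 * l := by positivity
  have hintegrand : EqOn (fun z ↦ z * F (ψ z) * f z)
      (fun z ↦ l * (z ^ 1 * exp (-(l * z)))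
        - exp (-1) * l * (z ^ 1 * exp (-(2 * l * z)))) (Ioi 0) := by
    intro z (hz : 0 < z)
    simp only [cdf_inverse_virtual_valuation hl hF hψ hz.le, hf z hz.le, exp_neg_two_mul_mul]
    ring
  rw [setIntegral_congr_fun measurableSet_Ioi hintegrand,
    integral_sub ((integrableOn_pow_mul_exp_neg_mul_Ioi 1 hl).const_mul _)
      ((integrableOn_pow_mul_exp_neg_mul_Ioi 1 h2l).const_mul _),
    integral_const_mul, integral_const_mul, integral_pow_mul_exp_neg_mul_Ioi 1 hl,
    integral_pow_mul_exp_neg_mul_Ioi 1 h2l, exp_neg, Nat.factorial_one]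
  field_simp
  ring

end ExponentialRevenue

lemma revenue_ratio_eq (t : ℝ) :
    (1 + 1 / (2 * exp 1)) / (exp (-1 - t) + 1 / exp 1) = (exp 1 + 1 / 2) / (1 + exp (-t)) := by
  have hnum : exp 1 * (1 + 1 / (2 * exp 1)) = exp 1 + 1 / 2 := by field_simp
  have hden : exp 1 * (exp (-1 - t) + 1 / exp 1) = 1 + exp (-t) := by
    rw [mul_add, ← exp_add, mul_one_div_cancel (exp_ne_zero 1), add_comm]
    ring_nf
  rw [← hnum, ← hden, mul_div_mul_left _ _ (exp_ne_zero 1)]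

theorem stmt_16
    (l : ℝ) (hl : 0 < l)
    (F f φ ψ : ℝ → ℝ)
    (hF : ∀ z : ℝ, 0 ≤ z → F z = 1 - Real.exp (-(l * z)))
    (hf : ∀ z : ℝ, 0 ≤ z → f z = l * Real.exp (-(l * z)))
    (hφ : ∀ z : ℝ, 0 ≤ z → φ z = z - 1/l)
    (hψ : ∀ y : ℝ, 0 ≤ y → ψ y = y + 1/l) :
    ψ 0 * (1 - F (ψ 0)) = 1 / (l * Real.exp 1)
    ∧ ψ (ψ 0 * (1 - F (ψ 0))) * (1 - F (ψ (ψ 0 * (1 - F (ψ 0)))))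
        + F (ψ (ψ 0 * (1 - F (ψ 0)))) * (ψ 0 * (1 - F (ψ 0)))
      = (1/l) * (Real.exp (-1 - 1 / Real.exp 1) + 1 / Real.exp 1)
    ∧ (∫ z in Ioi (0:ℝ), ψ z * (1 - F (ψ z)) * f z)
        + (∫ z in Ioi (0:ℝ), z * F (ψ z) * f z)
      = (1/l) * (1 + 1 / (2 * Real.exp 1))
    ∧ ((1/l) * (1 + 1 / (2 * Real.exp 1)))
        / ((1/l) * (Real.exp (-1 - 1 / Real.exp 1) + 1 / Real.exp 1))
      = (Real.exp 1 + 1/2) / (1 + Real.exp (-(1 / Real.exp 1))) := by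
  rw [← offerRevenue_zero]
  refine ⟨optimal_fixed_price_revenue_eq hl hF hψ, prediction_ignoring_revenue_eq hl hF hψ,
    ?_, ?_⟩
  · rw [strategic_revenue_eq hl hF hf hψ, honest_revenue_eq hl hF hf hψ]
    ring
  · rw [mul_div_mul_left _ _ (one_div_ne_zero hl.ne'), revenue_ratio_eq]
end

section
/- Let F be a probability distribution supported on the non-negative reals with continuous, strictly positive density f and F(z) < 1 for all z ≥ 0, and with non-decreasing hazard rate h(z) = f(z)/(1−F(z)). Then for every z ≥ 0, 1 − F(z) = exp(−∫₀^z h(y) dy), and consequently (1−F(φ⁻¹(z)))/(1−F(z)) = exp(−∫_z^{φ⁻¹(z)} h(y) dy) ≥ 1/e, where φ(z) = z − (1−F(z))/f(z) is the (strictly increasing) virtual valuation and φ⁻¹ its inverse on [0,∞). -/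
open MeasureTheory Real Set

/-!
Since `1 - F` has derivative `-f`, the hazard rate `h = f / (1 - F)` is the derivative of
`-log (1 - F)`, and integrating it gives `(1 - F b) / (1 - F a) = exp (-∫ y in a..b, h y)`.
If `φ w = z`, the definition of the virtual valuation says exactly that `w - z = 1 / h w`. As `h` is
non-decreasing, its integral over `[z, w]` is at most `(w - z) * h w = 1`.
-/

section Calculus

variable {a b : ℝ}

theorem hasDerivWithinAt_integral_Ici {E : Type*} [NormedAddCommGroup E] [NormedSpace ℝ E]
    [CompleteSpace E] {f : ℝ → E} {x : ℝ} (hf : ContinuousOn f (Ici a)) (hx : a ≤ x) :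
    HasDerivWithinAt (fun u ↦ ∫ t in a..u, f t) (f x) (Ici a) x := by
  -- The extension of `f` that is constant on `Iic a` makes one-sided continuity at `a` two-sided.
  let g : ℝ → E := fun t ↦ f (max a t)
  have hg : Continuous g := hf.comp_continuous (by fun_prop) fun t ↦ le_max_left a t
  have g_eq {t : ℝ} (ht : a ≤ t) : g t = f t := congrArg f (max_eq_right ht)
  have integral_eq : ∀ u ∈ Ici a, ∫ t in a..u, f t = ∫ t in a..u, g t := fun u hu ↦
    intervalIntegral.integral_congr fun t ht ↦ (g_eq (uIcc_of_le (mem_Ici.1 hu) ▸ ht).1).symm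
  rw [← g_eq hx]
  exact (hg.integral_hasStrictDerivAt a x).hasDerivAt.hasDerivWithinAt.congr_of_mem integral_eq hx

theorem integral_div_eq_log_sub_log {g g' : ℝ → ℝ}
    (hg : ∀ x ∈ uIcc a b, HasDerivWithinAt g (g' x) (uIcc a b) x)
    (hg' : ContinuousOn g' (uIcc a b)) (hg₀ : ∀ x ∈ uIcc a b, g x ≠ 0) :
    ∫ x in a..b, g' x / g x = log (g b) - log (g a) := by
  have g_cont : ContinuousOn g (uIcc a b) := fun x hx ↦ (hg x hx).continuousWithinAt
  refine intervalIntegral.integral_eq_sub_of_hasDeriv_right (f := fun x ↦ log (g x))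
    (g_cont.log hg₀) (fun x hx ↦ ?_) (hg'.div g_cont hg₀).intervalIntegrable
  have hx' : x ∈ uIcc a b := Ioo_subset_Icc_self hx
  exact (((hg x hx').log (hg₀ x hx')).hasDerivAt (Icc_mem_nhds hx.1 hx.2)).hasDerivWithinAt

theorem integral_le_sub_mul_of_monotoneOn {g : ℝ → ℝ} (hab : a ≤ b)
    (hg : MonotoneOn g (Icc a b)) : ∫ x in a..b, g x ≤ (b - a) * g b := by
  rw [← smul_eq_mul, ← intervalIntegral.integral_const]
  exact intervalIntegral.integral_mono_on hab (uIcc_of_le hab ▸ hg).intervalIntegrable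
    intervalIntegrable_const fun x hx ↦ hg hx (right_mem_Icc.2 hab) hx.2

end Calculus

/-- The hazard rate `h z = f z / (1 - F z)` of a distribution with density `f` and cumulative
distribution function `F`. It takes the junk value `0` where `F z = 1`. -/
noncomputable def hazardRate (f F : ℝ → ℝ) (z : ℝ) : ℝ :=
  f z / (1 - F z)

/-- The virtual valuation `φ z = z - (1 - F z) / f z` of a distribution with density `f` and
cumulative distribution function `F`. It takes the junk value `z` where `f z = 0`. -/
noncomputable def virtualValuation (f F : ℝ → ℝ) (z : ℝ) : ℝ :=
  z - (1 - F z) / f z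

section HazardRate

variable {f F : ℝ → ℝ}

theorem one_sub_div_one_sub_eq_exp_neg_integral_hazardRate {a b : ℝ}
    (hF : ∀ x ∈ uIcc a b, HasDerivWithinAt F (f x) (uIcc a b) x)
    (hf : ContinuousOn f (uIcc a b)) (hF_lt : ∀ x ∈ uIcc a b, F x < 1) :
    (1 - F b) / (1 - F a) = exp (-∫ y in a..b, hazardRate f F y) := by
  have survival_pos : ∀ x ∈ uIcc a b, 0 < 1 - F x := fun x hx ↦ sub_pos.2 (hF_lt x hx)
  have log_integral : ∫ y in a..b, -f y / (1 - F y) = log (1 - F b) - log (1 - F a) :=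
    integral_div_eq_log_sub_log (fun x hx ↦ (hF x hx).const_sub 1) hf.neg
      fun x hx ↦ (survival_pos x hx).ne'
  calc (1 - F b) / (1 - F a)
      = exp (log (1 - F b) - log (1 - F a)) := by
        rw [exp_sub, exp_log (survival_pos b right_mem_uIcc),
          exp_log (survival_pos a left_mem_uIcc)]
    _ = exp (-∫ y in a..b, hazardRate f F y) := by
        simp only [← log_integral, hazardRate, neg_div, intervalIntegral.integral_neg]

theorem virtualValuation_le_self {z : ℝ} (hf : 0 ≤ f z) (hF : F z ≤ 1) :
    virtualValuation f F z ≤ z :=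
  sub_le_self z (div_nonneg (sub_nonneg.2 hF) hf)

theorem sub_virtualValuation_mul_hazardRate {z : ℝ} (hf : f z ≠ 0) (hF : F z ≠ 1) :
    (z - virtualValuation f F z) * hazardRate f F z = 1 := by
  rw [virtualValuation, sub_sub_cancel, hazardRate, div_mul_div_cancel₀ hf,
    div_self (sub_ne_zero.2 hF.symm)]

theorem integral_hazardRate_virtualValuation_le_one {w : ℝ} (hf : 0 < f w) (hF : F w < 1)
    (h_mono : MonotoneOn (hazardRate f F) (Icc (virtualValuation f F w) w)) :
    ∫ y in virtualValuation f F w..w, hazardRate f F y ≤ 1 :=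
  (integral_le_sub_mul_of_monotoneOn (virtualValuation_le_self hf.le hF.le) h_mono).trans_eq
    (sub_virtualValuation_mul_hazardRate hf.ne' hF.ne)

end HazardRate

theorem stmt_17
(f F : ℝ → ℝ)
    (hf_cont : ContinuousOn f (Ici 0))
    (hf_pos : ∀ z ∈ Ici (0:ℝ), 0 < f z)
    (hF : ∀ z ∈ Ici (0:ℝ), F z = ∫ t in (0:ℝ)..z, f t)
    (hF_lt : ∀ z ∈ Ici (0:ℝ), F z < 1)
    (hprob : ∫ z in Ioi (0:ℝ), f z = 1)
(hMHR : ∀ y z : ℝ, 0 ≤ y → y ≤ z → f y / (1 - F y) ≤ f z / (1 - F z))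
(φ ψ : ℝ → ℝ)
    (hφ : ∀ z ∈ Ici (0:ℝ), φ z = z - (1 - F z) / f z)
    (hφ_mono : StrictMonoOn φ (Ici 0))
    (hφ_top : Filter.Tendsto φ Filter.atTop Filter.atTop)
    (hψ : ∀ y ∈ Ici (0:ℝ), ψ y ∈ Ici (0:ℝ) ∧ φ (ψ y) = y) :
    ∀ z : ℝ, 0 ≤ z →
      (1 - F z = Real.exp (-∫ y in (0:ℝ)..z, f y / (1 - F y)))
      ∧ (1 - F (ψ z)) / (1 - F z)
          = Real.exp (-∫ y in z..(ψ z), f y / (1 - F y))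
      ∧ (1 - F (ψ z)) / (1 - F z) ≥ 1 / Real.exp 1 := by
  have hF_deriv : ∀ x ∈ Ici (0 : ℝ), HasDerivWithinAt F (f x) (Ici 0) x := fun x hx ↦
    (hasDerivWithinAt_integral_Ici hf_cont hx).congr_of_mem hF hx
  have survival_ratio {a b : ℝ} (ha : 0 ≤ a) (hb : 0 ≤ b) :
      (1 - F b) / (1 - F a) = exp (-∫ y in a..b, hazardRate f F y) :=
    have hab : uIcc a b ⊆ Ici 0 := ordConnected_Ici.uIcc_subset ha hb
    one_sub_div_one_sub_eq_exp_neg_integral_hazardRate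
      (fun x hx ↦ (hF_deriv x (hab hx)).mono hab) (hf_cont.mono hab) fun x hx ↦ hF_lt x (hab hx)
  intro z hz
  obtain ⟨hw, hφw⟩ := hψ z hz
  have hz_eq : virtualValuation f F (ψ z) = z := (hφ _ hw).symm.trans hφw
  have h_mono : MonotoneOn (hazardRate f F) (Icc (virtualValuation f F (ψ z)) (ψ z)) :=
    fun x hx y _ hxy ↦ hMHR x y (hz.trans (hz_eq ▸ hx.1)) hxy
  refine ⟨?_, survival_ratio hz hw, ?_⟩
  · have F_zero : F 0 = 0 := by rw [hF 0 self_mem_Ici, intervalIntegral.integral_same]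
    simpa only [F_zero, sub_zero, div_one, hazardRate] using survival_ratio le_rfl hz
  · have h_le : ∫ y in z..ψ z, hazardRate f F y ≤ 1 := by
      simpa only [hz_eq] using
        integral_hazardRate_virtualValuation_le_one (hf_pos _ hw) (hF_lt _ hw) h_mono
    rw [survival_ratio hz hw, ge_iff_le, one_div, ← exp_neg]
    exact exp_le_exp.2 (neg_le_neg h_le)
end
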